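/- arXiv:1905.00605 — 3 statements merged into one kernel-verified Lean document; each statement's English description precedes it below -/
import Mathlib

section
/- Let X be a real Banach space that is ρ-convex and σ-smooth, and let 1 < p < ∞ with conjugate exponent p* (1/p + 1/p* = 1) satisfy σ ≤ p ≤ ρ and σ ≤ p* ≤ ρ. Let M, N be closed linear subspaces of X whose sum M + N is closed and such that for every bounded subset S ⊆ X there is κ ≥ 1 with min{dist(x,M)^p, dist(x,N)^p} ≤ ((κ−1)/κ)‖x‖^p + (1/κ) dist(x, M+N)^p for all x ∈ S. Then for every x ∈ X, the sequence defined by x₀ = x, x_{2n+1} = (I − P_M)x_{2n}, x_{2n} = (I − P_N)x_{2n−1} converges to (I − P_{M+N})x, and there exist constants C > 0 and q ∈ (0,1) such that ‖(I − P_{M+N})x − x_n‖ ≤ C q^n for all n; that is, the convergence is linear. -/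
open Filter Topology

noncomputable section

/-- The modulus of convexity of a normed space `X`. -/
def modConvex (X : Type*) [NormedAddCommGroup X] (ε : ℝ) : ℝ :=
  sInf {d : ℝ | ∃ x y : X, ‖x‖ = 1 ∧ ‖y‖ = 1 ∧ ε ≤ ‖x - y‖ ∧ d = 1 - ‖x + y‖ / 2}

/-- The modulus of smoothness of a normed space `X`. -/
def modSmooth (X : Type*) [NormedAddCommGroup X] [NormedSpace ℝ X] (τ : ℝ) : ℝ :=
  sSup {d : ℝ | ∃ x y : X, ‖x‖ = 1 ∧ ‖y‖ = 1 ∧ d = (‖x + τ • y‖ + ‖x - τ • y‖) / 2 - 1}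

/-- `X` is uniformly convex: the modulus of convexity is positive for positive ε. -/
def UnifConvex (X : Type*) [NormedAddCommGroup X] : Prop :=
  ∀ ε : ℝ, 0 < ε → ε ≤ 2 → 0 < modConvex X ε

/-- `X` is uniformly smooth: `ρ_X(τ)/τ → 0` as `τ → 0⁺`. -/
def UnifSmooth (X : Type*) [NormedAddCommGroup X] [NormedSpace ℝ X] : Prop :=
  Tendsto (fun τ => modSmooth X τ / τ) (𝓝[>] (0 : ℝ)) (𝓝 0)

/-- `X` is uniformly convex of power type `ρ`. -/
def PowerConvex (X : Type*) [NormedAddCommGroup X] (ρ : ℝ) : Prop :=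
  ∃ c > (0 : ℝ), ∀ ε ∈ Set.Icc (0 : ℝ) 2, c * ε ^ ρ ≤ modConvex X ε

/-- `X` is uniformly smooth of power type `σ` (with `σ > 1`). -/
def PowerSmooth (X : Type*) [NormedAddCommGroup X] [NormedSpace ℝ X] (σ : ℝ) : Prop :=
  1 < σ ∧ ∃ C > (0 : ℝ), ∀ τ ∈ Set.Icc (0 : ℝ) 1, modSmooth X τ ≤ C * τ ^ σ

variable {X : Type*} [NormedAddCommGroup X] [NormedSpace ℝ X]

/-- The duality mapping `j_p`, the Fréchet derivative of `x ↦ (1/p)‖x‖^p`. -/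
def dualityMap (p : ℝ) (x : X) : X →L[ℝ] ℝ :=
  fderiv ℝ (fun y : X => 1 / p * ‖y‖ ^ p) x

/-- The Bregman distance `D_p(x, y)`. -/
def bregmanDist (p : ℝ) (x y : X) : ℝ :=
  1 / p * ‖x‖ ^ p - 1 / p * ‖y‖ ^ p - dualityMap p y (x - y)

/-- The Bregman projection of `x` onto the set `S`: the minimizer of `m ↦ D_p(m, x)` over `S`. -/
def bregmanProj (p : ℝ) (S : Set X) (x : X) : X :=
  letI : Nonempty X := ⟨x⟩
  Classical.epsilon fun y => y ∈ S ∧ ∀ m ∈ S, bregmanDist p y x ≤ bregmanDist p m x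

/-- The Bregman distance `D_p(S, x)` from the point `x` to the set `S`. -/
def bregmanDistSet (p : ℝ) (S : Set X) (x : X) : ℝ :=
  bregmanDist p (bregmanProj p S x) x

/-- The metric projection of `x` onto the set `S`: the point of `S` nearest to `x`. -/
def metricProj (S : Set X) (x : X) : X :=
  letI : Nonempty X := ⟨x⟩
  Classical.epsilon fun y => y ∈ S ∧ ∀ m ∈ S, ‖x - y‖ ≤ ‖x - m‖


theorem aux_key {X : Type*} [NormedAddCommGroup X] [NormedSpace ℝ X] (ρ : ℝ) (hρ : 1 < ρ)
    (hconv : PowerConvex X ρ) : ∃ K > (0 : ℝ), ∀ (r d : ℝ) (u v : X), 0 ≤ d → ‖u‖ ≤ r → ‖v‖ ≤ r →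
      2 * d ≤ ‖u + v‖ → ‖u - v‖ ≤ K * r ^ (1 - 1 / ρ) * (r - d) ^ (1 / ρ) := by
  obtain ⟨c, hc, hcon⟩ := hconv
  have hρ0 : 0 < ρ := by linarith
  have hinv : 1 / ρ ≤ 1 := by rw [div_le_one hρ0]; exact hρ.le
  have hsph : ∀ u v : X, ‖u‖ = 1 → ‖v‖ = 1 → c * ‖u - v‖ ^ ρ ≤ 1 - ‖u + v‖ / 2 := by
    intro u v hu hv
    have h2 : ‖u - v‖ ≤ 2 := by
      have := norm_sub_le u v
      linarith
    refine (hcon _ ⟨norm_nonneg _, h2⟩).trans ?_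
    refine csInf_le ⟨0, ?_⟩ ⟨u, v, hu, hv, le_rfl, rfl⟩
    rintro d ⟨x, y, hx, hy, -, rfl⟩
    have := norm_add_le x y
    linarith
  set A : ℝ := (3 / c) ^ (1 / ρ) with hA
  have hApos : 0 < A := by positivity
  -- unit ball version
  have hball : ∀ (d : ℝ) (u v : X), 0 ≤ d → ‖u‖ ≤ 1 → ‖v‖ ≤ 1 → 2 * d ≤ ‖u + v‖ →
      ‖u - v‖ ≤ (A + 4) * (1 - d) ^ (1 / ρ) := by
    intro d u v hd hu hv huv
    have h1 := norm_add_le u v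
    have ht0 : 0 ≤ 1 - d := by linarith
    have htt : 1 - d ≤ (1 - d) ^ (1 / ρ) := by
      rcases ht0.eq_or_lt with h | h
      · rw [← h]; exact Real.rpow_nonneg le_rfl _
      · calc 1 - d = (1 - d) ^ (1 : ℝ) := (Real.rpow_one _).symm
          _ ≤ (1 - d) ^ (1 / ρ) := Real.rpow_le_rpow_of_exponent_ge h (by linarith) hinv
    have hAt : 0 ≤ A * (1 - d) ^ (1 / ρ) := mul_nonneg hApos.le (Real.rpow_nonneg ht0 _)
    rcases le_or_gt d (1 / 2) with hd2 | hd2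
    · have := norm_sub_le u v
      nlinarith
    · have hu0 : 0 < ‖u‖ := by linarith
      have hv0 : 0 < ‖v‖ := by linarith
      have nrm : ∀ w : X, 0 < ‖w‖ → ‖w‖ ≤ 1 → ‖(‖w‖⁻¹ • w)‖ = 1 ∧ ‖w - ‖w‖⁻¹ • w‖ ≤ 1 - ‖w‖ := by
        intro w hw hw1
        refine ⟨?_, ?_⟩
        · rw [norm_smul, norm_inv, norm_norm, inv_mul_cancel₀ hw.ne']
        · have : w - ‖w‖⁻¹ • w = (1 - ‖w‖⁻¹) • w := by rw [sub_smul, one_smul]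
          have h1 : 1 ≤ ‖w‖⁻¹ := (one_le_inv₀ hw).2 hw1
          rw [this, norm_smul, Real.norm_eq_abs, abs_of_nonpos (by linarith)]
          have := inv_mul_cancel₀ hw.ne'
          nlinarith
      obtain ⟨hu1, hu2⟩ := nrm u hu0 hu
      obtain ⟨hv1, hv2⟩ := nrm v hv0 hv
      set u' := ‖u‖⁻¹ • u
      set v' := ‖v‖⁻¹ • v
      have e1 : ‖u - v‖ ≤ ‖u' - v'‖ + ‖u - u'‖ + ‖v - v'‖ := by
        have : u - v = (u' - v') + (u - u') - (v - v') := by abel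
        rw [this]
        exact (norm_sub_le _ _).trans (by gcongr; exact norm_add_le _ _)
      have e2 : ‖u + v‖ ≤ ‖u' + v'‖ + ‖u - u'‖ + ‖v - v'‖ := by
        have : u + v = (u' + v') + (u - u') + (v - v') := by abel
        rw [this]
        exact (norm_add_le _ _).trans (by gcongr; exact norm_add_le _ _)
      have e3 := hsph u' v' hu1 hv1
      have e4 : ‖u' - v'‖ ^ ρ ≤ (3 / c) * (1 - d) := by
        rw [div_mul_eq_mul_div, le_div_iff₀ hc]
        linarith
      have e5 : ‖u' - v'‖ ≤ A * (1 - d) ^ (1 / ρ) := by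
        rw [hA, ← Real.mul_rpow (by positivity) ht0]
        calc ‖u' - v'‖ = (‖u' - v'‖ ^ ρ) ^ (1 / ρ) := by
              rw [one_div, Real.rpow_rpow_inv (norm_nonneg _) hρ0.ne']
          _ ≤ _ := Real.rpow_le_rpow (by positivity) e4 (by positivity)
      linarith
  refine ⟨A + 4, by positivity, ?_⟩
  intro r d u v hd hu hv huv
  have hr0 : 0 ≤ r := (norm_nonneg u).trans hu
  have hdr : d ≤ r := by
    have := norm_add_le u v
    linarith
  rcases hr0.eq_or_lt with h | h
  · have hu0 : u = 0 := norm_le_zero_iff.1 (by linarith)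
    have hv0 : v = 0 := norm_le_zero_iff.1 (by linarith)
    rw [hu0, hv0, sub_zero, norm_zero]
    have := Real.rpow_nonneg hr0 (1 - 1 / ρ)
    have := Real.rpow_nonneg (sub_nonneg.2 hdr) (1 / ρ)
    positivity
  · have hsc : ∀ w : X, ‖r⁻¹ • w‖ = ‖w‖ / r := by
      intro w
      rw [norm_smul, norm_inv, Real.norm_eq_abs, abs_of_pos h]
      field_simp
    have := hball (d / r) (r⁻¹ • u) (r⁻¹ • v) (by positivity)
      (by rw [hsc]; exact (div_le_one h).2 hu) (by rw [hsc]; exact (div_le_one h).2 hv)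
      (by rw [← smul_add, hsc, ← mul_div_assoc]; gcongr)
    rw [← smul_sub, hsc, div_le_iff₀ h] at this
    refine this.trans (le_of_eq ?_)
    have e : 1 - d / r = (r - d) / r := by field_simp
    rw [e, Real.div_rpow (by linarith) h.le, Real.rpow_sub h, Real.rpow_one]
    have : r ^ (1 / ρ) ≠ 0 := (Real.rpow_pos_of_pos h _).ne'
    field_simp

theorem aux_mid {X : Type*} [NormedAddCommGroup X] [NormedSpace ℝ X] (L : Submodule ℝ X)
    (x y z : X) (hy : y ∈ L) (hz : z ∈ L) :
    2 * Metric.infDist x (L : Set X) ≤ ‖(x - y) + (x - z)‖ := by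
  have hm : (1 / 2 : ℝ) • (y + z) ∈ (L : Set X) := L.smul_mem _ (L.add_mem hy hz)
  have := Metric.infDist_le_dist_of_mem (x := x) hm
  have e : (x - y) + (x - z) = (2 : ℝ) • (x - (1 / 2 : ℝ) • (y + z)) := by module
  rw [e, norm_smul, ← dist_eq_norm, Real.norm_eq_abs, abs_of_pos two_pos]
  linarith

theorem aux_proj {X : Type*} [NormedAddCommGroup X] [NormedSpace ℝ X] [CompleteSpace X]
    (ρ : ℝ) (hρ : 1 < ρ) (hconv : PowerConvex X ρ) (L : Submodule ℝ X)
    (hL : IsClosed (L : Set X)) (x : X) :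
    metricProj (L : Set X) x ∈ L ∧
      ‖x - metricProj (L : Set X) x‖ = Metric.infDist x (L : Set X) := by
  have hne : (L : Set X).Nonempty := ⟨0, L.zero_mem⟩
  have hρ0 : 0 < ρ := by linarith
  obtain ⟨K, hK, hkey⟩ := aux_key ρ hρ hconv
  have hex : ∃ y : X, y ∈ (L : Set X) ∧ ∀ m ∈ (L : Set X), ‖x - y‖ ≤ ‖x - m‖ := by
    set d := Metric.infDist x (L : Set X) with hd
    have hd0 : 0 ≤ d := Metric.infDist_nonneg
    have hseq : ∀ n : ℕ, ∃ m ∈ (L : Set X), dist x m < d + 1 / ((n : ℝ) + 1) := by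
      intro n
      rw [← Metric.infDist_lt_iff hne]
      have : (0 : ℝ) < 1 / ((n : ℝ) + 1) := by positivity
      linarith
    choose m hm hmd using hseq
    have hlim1 : Tendsto (fun n : ℕ => d + 1 / ((n : ℝ) + 1)) atTop (𝓝 d) := by
      simpa using tendsto_one_div_add_atTop_nhds_zero_nat.const_add d
    have hcs : CauchySeq m := by
      refine cauchySeq_of_le_tendsto_0
        (fun n : ℕ => K * (d + 1 / ((n : ℝ) + 1)) ^ (1 - 1 / ρ) *
          ((d + 1 / ((n : ℝ) + 1)) - d) ^ (1 / ρ)) ?_ ?_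
      · intro i j k hi hj
        have hb : ∀ i, k ≤ i → ‖x - m i‖ ≤ d + 1 / ((k : ℝ) + 1) := by
          intro i hi
          rw [← dist_eq_norm]
          refine (hmd i).le.trans ?_
          gcongr
        have := hkey _ d (x - m i) (x - m j) hd0 (hb i hi) (hb j hj) (aux_mid L x _ _ (hm i) (hm j))
        rw [dist_comm, dist_eq_norm]
        simpa using this
      · have hs : 0 < 1 / ρ := by positivity
        have hs1 : 0 ≤ 1 - 1 / ρ := by
          rw [sub_nonneg, div_le_one hρ0]; exact hρ.le
        have t1 := (hlim1.rpow_const (p := 1 - 1 / ρ) (Or.inr hs1)).const_mul K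
        have t2 := (hlim1.sub_const d).rpow_const (p := 1 / ρ) (Or.inr hs.le)
        have := t1.mul t2
        rwa [sub_self, Real.zero_rpow hs.ne', mul_zero] at this
    obtain ⟨y, hy⟩ := cauchySeq_tendsto_of_complete hcs
    refine ⟨y, hL.mem_of_tendsto hy (Eventually.of_forall hm), ?_⟩
    intro z hz
    have h1 : Tendsto (fun n => dist x (m n)) atTop (𝓝 (dist x y)) := tendsto_const_nhds.dist hy
    have h2 : dist x y ≤ d := le_of_tendsto_of_tendsto' h1 hlim1 (fun n => (hmd n).le)
    rw [← dist_eq_norm, ← dist_eq_norm]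
    exact h2.trans (Metric.infDist_le_dist_of_mem hz)
  have hsp : metricProj (L : Set X) x ∈ (L : Set X) ∧
      ∀ m ∈ (L : Set X), ‖x - metricProj (L : Set X) x‖ ≤ ‖x - m‖ := by
    unfold metricProj
    exact Classical.epsilon_spec hex
  refine ⟨hsp.1, le_antisymm ?_ ?_⟩
  · rw [Metric.le_infDist hne]
    intro y hy
    rw [dist_eq_norm]
    exact hsp.2 y hy
  · rw [← dist_eq_norm]
    exact Metric.infDist_le_dist_of_mem hsp.1

theorem aux_shift {X : Type*} [NormedAddCommGroup X] [NormedSpace ℝ X] (L : Submodule ℝ X)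
    (x m : X) (hm : m ∈ L) :
    Metric.infDist (x - m) (L : Set X) = Metric.infDist x (L : Set X) := by
  have hne : (L : Set X).Nonempty := ⟨0, L.zero_mem⟩
  have key : ∀ x m : X, m ∈ L → Metric.infDist (x - m) (L : Set X) ≤ Metric.infDist x (L : Set X) := by
    intro x m hm
    rw [Metric.le_infDist hne]
    intro y hy
    have := Metric.infDist_le_dist_of_mem (x := x - m) (show y - m ∈ (L : Set X) from L.sub_mem hy hm)
    simpa using this
  refine le_antisymm (key x m hm) ?_
  simpa using key (x - m) (-m) (L.neg_mem hm)

theorem statement17 {X : Type*} [NormedAddCommGroup X] [NormedSpace ℝ X] [CompleteSpace X]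
    (ρ σ p pstar : ℝ) (hconv : PowerConvex X ρ) (hsmooth : PowerSmooth X σ)
    (hp : 1 < p) (hconj : 1 / p + 1 / pstar = 1)
    (hσp : σ ≤ p) (hpρ : p ≤ ρ) (hσps : σ ≤ pstar) (hpsρ : pstar ≤ ρ)
    (M N : Submodule ℝ X) (hM : IsClosed (M : Set X)) (hN : IsClosed (N : Set X))
    (hMN : IsClosed ((M ⊔ N : Submodule ℝ X) : Set X))
    (hcond : ∀ S : Set X, Bornology.IsBounded S → ∃ κ ≥ (1 : ℝ), ∀ x ∈ S,
      min (Metric.infDist x (M : Set X) ^ p) (Metric.infDist x (N : Set X) ^ p) ≤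
        (κ - 1) / κ * ‖x‖ ^ p +
          1 / κ * Metric.infDist x ((M ⊔ N : Submodule ℝ X) : Set X) ^ p)
    (a : X) (x : ℕ → X) (hx0 : x 0 = a)
    (hodd : ∀ n : ℕ, x (2 * n + 1) = x (2 * n) - metricProj (M : Set X) (x (2 * n)))
    (heven : ∀ n : ℕ, x (2 * n + 2) = x (2 * n + 1) - metricProj (N : Set X) (x (2 * n + 1))) :
    Filter.Tendsto x Filter.atTop
      (𝓝 (a - metricProj ((M ⊔ N : Submodule ℝ X) : Set X) a)) ∧
    ∃ C > (0 : ℝ), ∃ q ∈ Set.Ioo (0 : ℝ) 1, ∀ n : ℕ,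
      ‖(a - metricProj ((M ⊔ N : Submodule ℝ X) : Set X) a) - x n‖ ≤ C * q ^ n := by
  have hρ : 1 < ρ := by linarith
  have hρ0 : 0 < ρ := by linarith
  have hp0 : 0 < p := by linarith
  obtain ⟨K, hK, hkey⟩ := aux_key ρ hρ hconv
  have hPM := aux_proj ρ hρ hconv M hM
  have hPN := aux_proj ρ hρ hconv N hN
  obtain ⟨hPL, hPLd⟩ := aux_proj ρ hρ hconv (M ⊔ N) hMN a
  set L : Submodule ℝ X := M ⊔ N with hLdef
  set b := metricProj (L : Set X) a with hb
  set d := Metric.infDist a (L : Set X) with hd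
  have hd0 : 0 ≤ d := Metric.infDist_nonneg
  have hle0 : ∀ (S : Submodule ℝ X) (y : X), Metric.infDist y (S : Set X) ≤ ‖y‖ := by
    intro S y
    have := Metric.infDist_le_dist_of_mem (x := y) (show (0 : X) ∈ (S : Set X) from S.zero_mem)
    simpa using this
  -- increments stay in the sum
  have hinc : ∀ n, ∃ m ∈ L, x (n + 1) = x n - m := by
    intro n
    obtain ⟨k, hk | hk⟩ := Nat.even_or_odd' n
    · subst hk
      exact ⟨_, (le_sup_left : M ≤ L) (hPM (x (2 * k))).1, hodd k⟩
    · subst hk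
      exact ⟨_, (le_sup_right : N ≤ L) (hPN (x (2 * k + 1))).1, heven k⟩
  have hmem : ∀ n, ∃ m ∈ L, x n = a - m := by
    intro n
    induction n with
    | zero => exact ⟨0, L.zero_mem, by rw [hx0, sub_zero]⟩
    | succ n ih =>
      obtain ⟨m, hm, h⟩ := ih
      obtain ⟨m', hm', h'⟩ := hinc n
      exact ⟨m + m', L.add_mem hm hm', by rw [h', h]; abel⟩
  have hdist : ∀ n, Metric.infDist (x n) (L : Set X) = d := by
    intro n
    obtain ⟨m, hm, h⟩ := hmem n
    rw [h, aux_shift L a m hm]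
  have hdx : ∀ n, d ≤ ‖x n‖ := fun n => by rw [← hdist n]; exact hle0 L _
  have hnM : ∀ k, ‖x (2 * k + 1)‖ = Metric.infDist (x (2 * k)) (M : Set X) := by
    intro k
    rw [hodd k]; exact (hPM _).2
  have hnN : ∀ k, ‖x (2 * k + 2)‖ = Metric.infDist (x (2 * k + 1)) (N : Set X) := by
    intro k
    rw [heven k]; exact (hPN _).2
  have hdM : ∀ k, Metric.infDist (x (2 * k + 1)) (M : Set X) = ‖x (2 * k + 1)‖ := by
    intro k
    rw [hnM k, hodd k, aux_shift M _ _ (hPM _).1]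
  have hdN : ∀ k, Metric.infDist (x (2 * k + 2)) (N : Set X) = ‖x (2 * k + 2)‖ := by
    intro k
    rw [hnN k, heven k, aux_shift N _ _ (hPN _).1]
  have hmono1 : ∀ n, ‖x (n + 1)‖ ≤ ‖x n‖ := by
    intro n
    obtain ⟨k, hk | hk⟩ := Nat.even_or_odd' n
    · subst hk
      rw [hnM]; exact hle0 _ _
    · subst hk
      rw [hnN]; exact hle0 _ _
  have hbd : ∀ n, ‖x n‖ ≤ ‖a‖ := by
    intro n
    induction n with
    | zero => rw [hx0]
    | succ n ih => exact (hmono1 n).trans ih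
  obtain ⟨κ, hκ, hcond⟩ := hcond (Metric.closedBall 0 ‖a‖) Metric.isBounded_closedBall
  have hκ0 : 0 < κ := by linarith
  -- the contraction step
  have hstep : ∀ n, ‖x (n + 2)‖ ^ p ≤ (κ - 1) / κ * ‖x (n + 1)‖ ^ p + 1 / κ * d ^ p := by
    intro n
    have hc := hcond (x (n + 1)) (by simpa using hbd (n + 1))
    rw [hdist] at hc
    have hm : ‖x (n + 2)‖ ^ p ≤ ‖x (n + 1)‖ ^ p :=
      Real.rpow_le_rpow (norm_nonneg _) (hmono1 (n + 1)) hp0.le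
    refine le_trans ?_ hc
    obtain ⟨k, hk | hk⟩ := Nat.even_or_odd' n
    · subst hk
      rw [hdM k, ← hnN k]
      exact le_min hm le_rfl
    · subst hk
      have e1 := hdN k
      have e2 := hnM (k + 1)
      have e3 : 2 * (k + 1) = 2 * k + 2 := by ring
      rw [e3] at e2
      rw [show 2 * k + 1 + 1 = 2 * k + 2 from rfl, e1, ← e2]
      exact le_min le_rfl hm
  set θ : ℝ := max ((κ - 1) / κ) (1 / 2) with hθ
  have hθ0 : 0 < θ := lt_of_lt_of_le (by norm_num) (le_max_right _ _)
  have hθ1 : θ < 1 := max_lt (by rw [div_lt_one hκ0]; linarith) (by norm_num)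
  set E : ℝ := ‖a‖ ^ p / θ with hE
  have hap : 0 ≤ ‖a‖ ^ p := Real.rpow_nonneg (norm_nonneg _) _
  have hdp : 0 ≤ d ^ p := Real.rpow_nonneg hd0 _
  have hE0 : 0 ≤ E := div_nonneg hap hθ0.le
  have hEθ : E * θ = ‖a‖ ^ p := div_mul_cancel₀ _ hθ0.ne'
  have hbp : ∀ n, ‖x n‖ ^ p ≤ ‖a‖ ^ p := fun n =>
    Real.rpow_le_rpow (norm_nonneg _) (hbd n) hp0.le
  have hdxp : ∀ n, d ^ p ≤ ‖x n‖ ^ p := fun n => Real.rpow_le_rpow hd0 (hdx n) hp0.le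
  have hgeo1 : ∀ n, ‖x (n + 1)‖ ^ p - d ^ p ≤ E * θ ^ (n + 1) := by
    intro n
    induction n with
    | zero =>
      have := hbp (0 + 1)
      rw [zero_add, pow_one, hEθ]
      rw [zero_add] at this
      linarith
    | succ n ih =>
      have h1 := hstep n
      have h2 : (κ - 1) / κ * ‖x (n + 1)‖ ^ p + 1 / κ * d ^ p
          = (κ - 1) / κ * (‖x (n + 1)‖ ^ p - d ^ p) + d ^ p := by
        field_simp
        ring
      have h3 : (κ - 1) / κ * (‖x (n + 1)‖ ^ p - d ^ p) ≤ θ * (‖x (n + 1)‖ ^ p - d ^ p) :=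
        mul_le_mul_of_nonneg_right (le_max_left _ _) (by linarith [hdxp (n + 1)])
      have h4 := mul_le_mul_of_nonneg_left ih hθ0.le
      calc ‖x (n + 2)‖ ^ p - d ^ p ≤ θ * (E * θ ^ (n + 1)) := by linarith
        _ = E * θ ^ (n + 1 + 1) := by ring
  have hgeo : ∀ n, ‖x n‖ ^ p - d ^ p ≤ E * θ ^ n := by
    intro n
    cases n with
    | zero =>
      have := hbp 0
      rw [pow_zero, mul_one]
      nlinarith
    | succ n => exact hgeo1 n
  have hpow : ∀ n, (‖x n‖ - d) ≤ (E * θ ^ n) ^ (1 / p) := by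
    intro n
    have hnn : 0 ≤ ‖x n‖ - d := by linarith [hdx n]
    have h1 : (‖x n‖ - d) ^ p + d ^ p ≤ (‖x n‖ - d + d) ^ p :=
      Real.add_rpow_le_rpow_add hnn hd0 hp.le
    rw [sub_add_cancel] at h1
    calc ‖x n‖ - d = ((‖x n‖ - d) ^ p) ^ (1 / p) := by
          rw [one_div, Real.rpow_rpow_inv hnn hp0.ne']
      _ ≤ _ := Real.rpow_le_rpow (Real.rpow_nonneg hnn _) (by linarith [hgeo n]) (by positivity)
  set s : ℝ := 1 / p * (1 / ρ) with hs
  have hs0 : 0 < s := by positivity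
  have hs1 : 0 ≤ 1 - 1 / ρ := by
    rw [sub_nonneg, div_le_one hρ0]; exact hρ.le
  set C : ℝ := K * ‖a‖ ^ (1 - 1 / ρ) * E ^ s with hC
  have hC0 : 0 ≤ C := by positivity
  have hq0 : 0 < θ ^ s := Real.rpow_pos_of_pos hθ0 _
  have hq1 : θ ^ s < 1 := Real.rpow_lt_one hθ0.le hθ1 hs0
  have hmain : ∀ n, ‖(a - b) - x n‖ ≤ C * (θ ^ s) ^ n := by
    intro n
    obtain ⟨m, hm, h⟩ := hmem n
    have h1 := hkey ‖x n‖ d (a - b) (x n) hd0 (by rw [hPLd]; exact hdx n) le_rfl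
      (by rw [h]; exact aux_mid L a b m hPL hm)
    have hnn : 0 ≤ ‖x n‖ - d := by linarith [hdx n]
    have h2 : (‖x n‖ - d) ^ (1 / ρ) ≤ E ^ s * (θ ^ s) ^ n := by
      calc (‖x n‖ - d) ^ (1 / ρ) ≤ ((E * θ ^ n) ^ (1 / p)) ^ (1 / ρ) :=
            Real.rpow_le_rpow hnn (hpow n) (by positivity)
        _ = (E * θ ^ n) ^ s := by rw [← Real.rpow_mul (by positivity)]
        _ = E ^ s * (θ ^ s) ^ n := by
            rw [Real.mul_rpow hE0 (by positivity), ← Real.rpow_natCast, ← Real.rpow_natCast,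
              ← Real.rpow_mul hθ0.le, ← Real.rpow_mul hθ0.le, mul_comm s]
    calc ‖(a - b) - x n‖ ≤ K * ‖x n‖ ^ (1 - 1 / ρ) * (‖x n‖ - d) ^ (1 / ρ) := h1
      _ ≤ K * ‖a‖ ^ (1 - 1 / ρ) * (E ^ s * (θ ^ s) ^ n) := by
          have := Real.rpow_le_rpow (norm_nonneg _) (hbd n) hs1
          gcongr
      _ = C * (θ ^ s) ^ n := by rw [hC]; ring
  refine ⟨?_, C + 1, by positivity, θ ^ s, ⟨hq0, hq1⟩, fun n => (hmain n).trans ?_⟩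
  · rw [tendsto_iff_norm_sub_tendsto_zero]
    have hlim : Tendsto (fun n : ℕ => C * (θ ^ s) ^ n) atTop (𝓝 0) := by
      simpa using (tendsto_pow_atTop_nhds_zero_of_lt_one hq0.le hq1).const_mul C
    refine squeeze_zero (fun n => norm_nonneg _) (fun n => ?_) hlim
    rw [norm_sub_rev]
    exact hmain n
  · gcongr
    linarith
end
end

section
/- Let X be a real Banach space that is 2-convex and 2-smooth, and let M, N be closed linear subspaces of X such that M + N is closed. Then for every x ∈ X, the sequence defined by x₀ = x, x_{2n+1} = (I − P_M)x_{2n}, x_{2n} = (I − P_N)x_{2n−1} converges to (I − P_{M+N})x, and there exist constants C > 0 and q ∈ (0,1) such that ‖(I − P_{M+N})x − x_n‖ ≤ C q^n for all n; that is, the convergence is linear. -/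
open Filter Topology

noncomputable section

variable {X : Type*} [NormedAddCommGroup X] [NormedSpace ℝ X]

theorem aux_convex {X : Type*} [NormedAddCommGroup X] [NormedSpace ℝ X]
    (hconv : PowerConvex X 2) :
    ∃ k > (0 : ℝ), ∀ x y : X, ‖x + y‖ ^ 2 + k * ‖x - y‖ ^ 2 ≤ 2 * ‖x‖ ^ 2 + 2 * ‖y‖ ^ 2 := by
  obtain ⟨c, hc, h⟩ := hconv
  have unit : ∀ u v : X, ‖u‖ = 1 → ‖v‖ = 1 → ‖u + v‖ ≤ 2 - 2 * c * ‖u - v‖ ^ 2 := by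
    intro u v hu hv
    have h2 : ‖u - v‖ ≤ 2 := by
      have := norm_sub_le u v
      linarith
    have h1 := h ‖u - v‖ ⟨norm_nonneg _, h2⟩
    rw [Real.rpow_two] at h1
    have h3 : modConvex X ‖u - v‖ ≤ 1 - ‖u + v‖ / 2 := by
      apply csInf_le
      · refine ⟨0, ?_⟩
        rintro d ⟨x, y, hx, hy, -, rfl⟩
        have := norm_add_le x y
        linarith
      · exact ⟨u, v, hu, hv, le_rfl, rfl⟩
    linarith
  have key : ∀ x y : X, ‖y‖ ≤ ‖x‖ →
      ‖x + y‖ ^ 2 + min (1 / 2) c * ‖x - y‖ ^ 2 ≤ 2 * ‖x‖ ^ 2 + 2 * ‖y‖ ^ 2 := by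
    intro x y hxy
    have hk1 : min (1 / 2) c ≤ 1 / 2 := min_le_left _ _
    have hk2 : min (1 / 2) c ≤ c := min_le_right _ _
    have hk0 : 0 < min (1 / 2) c := lt_min (by norm_num) hc
    by_cases hy : y = 0
    · subst hy
      simp only [add_zero, sub_zero, norm_zero]
      nlinarith [sq_nonneg ‖x‖]
    have hb : 0 < ‖y‖ := norm_pos_iff.mpr hy
    have ha : 0 < ‖x‖ := by linarith
    set a := ‖x‖ with ha'
    set b := ‖y‖ with hb'
    obtain ⟨u, hu⟩ : ∃ u : X, u = a⁻¹ • x := ⟨_, rfl⟩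
    obtain ⟨v, hv⟩ : ∃ v : X, v = b⁻¹ • y := ⟨_, rfl⟩
    have hxu : x = a • u := by rw [hu, smul_smul, mul_inv_cancel₀ ha.ne', one_smul]
    have hyv : y = b • v := by rw [hv, smul_smul, mul_inv_cancel₀ hb.ne', one_smul]
    have hu1 : ‖u‖ = 1 := by
      rw [hu, norm_smul, norm_inv, Real.norm_of_nonneg ha.le, ← ha', inv_mul_cancel₀ ha.ne']
    have hv1 : ‖v‖ = 1 := by
      rw [hv, norm_smul, norm_inv, Real.norm_of_nonneg hb.le, ← hb', inv_mul_cancel₀ hb.ne']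
    have huv := unit u v hu1 hv1
    set d := ‖u - v‖ with hd
    have hd0 : 0 ≤ d := norm_nonneg _
    have e1 : x + y = (a - b) • u + b • (u + v) := by
      rw [hxu, hyv]; module
    have e2 : x - y = (a - b) • u + b • (u - v) := by
      rw [hxu, hyv]; module
    have n1 : ‖x + y‖ ≤ (a - b) + b * ‖u + v‖ := by
      rw [e1]
      refine (norm_add_le _ _).trans ?_
      rw [norm_smul, norm_smul, hu1, Real.norm_of_nonneg hb.le,
        Real.norm_of_nonneg (by linarith), mul_one]
    have n2 : ‖x - y‖ ≤ (a - b) + b * d := by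
      rw [e2]
      refine (norm_add_le _ _).trans ?_
      rw [norm_smul, norm_smul, hu1, Real.norm_of_nonneg hb.le,
        Real.norm_of_nonneg (by linarith), mul_one]
    have n3 : ‖x + y‖ ≤ a + b := norm_add_le x y
    have n0 : 0 ≤ ‖x + y‖ := norm_nonneg _
    have n4 : ‖x + y‖ ≤ a + b - 2 * b * c * d ^ 2 := by
      have := mul_le_mul_of_nonneg_left huv hb.le
      nlinarith
    have n5 : ‖x + y‖ ^ 2 ≤ (a + b) * (a + b - 2 * b * c * d ^ 2) := by
      calc ‖x + y‖ ^ 2 ≤ (a + b) * ‖x + y‖ := by nlinarith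
        _ ≤ _ := mul_le_mul_of_nonneg_left n4 (by linarith)
    have n6 : ‖x - y‖ ^ 2 ≤ 2 * (a - b) ^ 2 + 2 * (b * d) ^ 2 := by
      have : ‖x - y‖ ^ 2 ≤ ((a - b) + b * d) ^ 2 := by
        gcongr
      nlinarith [sq_nonneg ((a - b) - b * d)]
    have n7 : min (1 / 2) c * ‖x - y‖ ^ 2 ≤
        min (1 / 2) c * (2 * (a - b) ^ 2 + 2 * (b * d) ^ 2) :=
      mul_le_mul_of_nonneg_left n6 hk0.le
    have n8 : min (1 / 2) c * (a - b) ^ 2 ≤ 1 / 2 * (a - b) ^ 2 :=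
      mul_le_mul_of_nonneg_right hk1 (sq_nonneg _)
    have n9 : min (1 / 2) c * (b * d) ^ 2 ≤ c * (b * d) ^ 2 :=
      mul_le_mul_of_nonneg_right hk2 (sq_nonneg _)
    have n10 : 0 ≤ a * b * c * d ^ 2 := by positivity
    nlinarith
  refine ⟨min (1 / 2) c, lt_min (by norm_num) hc, fun x y => ?_⟩
  rcases le_total ‖y‖ ‖x‖ with hxy | hxy
  · exact key x y hxy
  · have := key y x hxy
    rw [add_comm y x, norm_sub_rev y x] at this
    linarith

theorem aux_smooth {X : Type*} [NormedAddCommGroup X] [NormedSpace ℝ X]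
    (hsmooth : PowerSmooth X 2) :
    ∃ C > (0 : ℝ), ∀ x y : X, ‖x + y‖ ^ 2 + ‖x - y‖ ^ 2 ≤ 2 * ‖x‖ ^ 2 + C * ‖y‖ ^ 2 := by
  obtain ⟨-, C, hC, h⟩ := hsmooth
  refine ⟨4 * C + 2 * C ^ 2 + 8, by positivity, fun x y => ?_⟩
  have hp : 0 ≤ (4 * C + 2 * C ^ 2) := by positivity
  rcases le_or_gt ‖x‖ ‖y‖ with hxy | hxy
  · have h1 := norm_add_le x y
    have h2 := norm_sub_le x y
    have h3 : ‖x + y‖ ^ 2 ≤ (‖x‖ + ‖y‖) ^ 2 := by gcongr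
    have h4 : ‖x - y‖ ^ 2 ≤ (‖x‖ + ‖y‖) ^ 2 := by gcongr
    have h5 : 0 ≤ (4 * C + 2 * C ^ 2) * ‖y‖ ^ 2 := by positivity
    have h6 := norm_nonneg x
    nlinarith
  by_cases hy : y = 0
  · subst hy; simp; linarith
  have hb : 0 < ‖y‖ := norm_pos_iff.mpr hy
  have ha : 0 < ‖x‖ := by linarith
  set a := ‖x‖ with ha'
  set b := ‖y‖ with hb'
  obtain ⟨u, hu⟩ : ∃ u : X, u = a⁻¹ • x := ⟨_, rfl⟩
  obtain ⟨v, hv⟩ : ∃ v : X, v = b⁻¹ • y := ⟨_, rfl⟩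
  have hxu : x = a • u := by rw [hu, smul_smul, mul_inv_cancel₀ ha.ne', one_smul]
  have hyv : y = b • v := by rw [hv, smul_smul, mul_inv_cancel₀ hb.ne', one_smul]
  have hu1 : ‖u‖ = 1 := by
    rw [hu, norm_smul, norm_inv, Real.norm_of_nonneg ha.le, ← ha', inv_mul_cancel₀ ha.ne']
  have hv1 : ‖v‖ = 1 := by
    rw [hv, norm_smul, norm_inv, Real.norm_of_nonneg hb.le, ← hb', inv_mul_cancel₀ hb.ne']
  obtain ⟨τ, hτ⟩ : ∃ τ : ℝ, τ = b / a := ⟨_, rfl⟩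
  have hτ0 : 0 ≤ τ := by rw [hτ]; positivity
  have hτ1 : τ ≤ 1 := by rw [hτ, div_le_one ha]; exact hxy.le
  have hbτ : b = a * τ := by rw [hτ]; field_simp
  have nv : ‖τ • v‖ = τ := by rw [norm_smul, hv1, Real.norm_of_nonneg hτ0, mul_one]
  have h1 := h τ ⟨hτ0, hτ1⟩
  rw [Real.rpow_two] at h1
  have h2 : (‖u + τ • v‖ + ‖u - τ • v‖) / 2 - 1 ≤ modSmooth X τ := by
    apply le_csSup
    · refine ⟨τ, ?_⟩
      rintro d ⟨x, y, hx, hy, rfl⟩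
      have h3 := norm_add_le x (τ • y)
      have h4 := norm_sub_le x (τ • y)
      rw [norm_smul, hy, Real.norm_of_nonneg hτ0, hx] at h3 h4
      linarith
    · exact ⟨u, v, hu1, hv1, rfl⟩
  have e1 : ‖x + y‖ = a * ‖u + τ • v‖ := by
    have e : x + y = a • (u + τ • v) := by
      rw [smul_add, smul_smul, ← hbτ, ← hxu, ← hyv]
    rw [e, norm_smul, Real.norm_of_nonneg ha.le]
  have e2 : ‖x - y‖ = a * ‖u - τ • v‖ := by
    have e : x - y = a • (u - τ • v) := by
      rw [smul_sub, smul_smul, ← hbτ, ← hxu, ← hyv]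
    rw [e, norm_smul, Real.norm_of_nonneg ha.le]
  have d1 : ‖u + τ • v‖ - ‖u - τ • v‖ ≤ 2 * τ := by
    have h3 := norm_add_le (u - τ • v) ((2 : ℝ) • τ • v)
    rw [norm_smul 2, nv] at h3
    have : u - τ • v + (2 : ℝ) • τ • v = u + τ • v := by module
    rw [this] at h3
    norm_num at h3
    linarith
  have d2 : -(2 * τ) ≤ ‖u + τ • v‖ - ‖u - τ • v‖ := by
    have h3 := norm_sub_le (u + τ • v) ((2 : ℝ) • τ • v)
    rw [norm_smul 2, nv] at h3
    have : u + τ • v - (2 : ℝ) • τ • v = u - τ • v := by module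
    rw [this] at h3
    norm_num at h3
    linarith
  rw [e1, e2, hbτ]
  have p0 : 0 ≤ ‖u + τ • v‖ := norm_nonneg _
  have q0 : 0 ≤ ‖u - τ • v‖ := norm_nonneg _
  generalize ‖u + τ • v‖ = p at *
  generalize ‖u - τ • v‖ = q at *
  have s1 : p + q ≤ 2 + 2 * C * τ ^ 2 := by linarith
  have s2 : (p + q) ^ 2 ≤ (2 + 2 * C * τ ^ 2) ^ 2 := by gcongr
  have s3 : (p - q) ^ 2 ≤ (2 * τ) ^ 2 := sq_le_sq' d2 d1
  have s4 : τ ^ 2 * τ ^ 2 ≤ τ ^ 2 * 1 :=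
    mul_le_mul_of_nonneg_left (by nlinarith) (sq_nonneg _)
  have s5 : C ^ 2 * (τ ^ 2 * τ ^ 2) ≤ C ^ 2 * (τ ^ 2 * 1) :=
    mul_le_mul_of_nonneg_left s4 (sq_nonneg _)
  have s6 : p ^ 2 + q ^ 2 ≤ 2 + (4 * C + 2 * C ^ 2 + 8) * τ ^ 2 := by nlinarith [sq_nonneg τ]
  have := mul_le_mul_of_nonneg_left s6 (sq_nonneg a)
  nlinarith

theorem aux_proj_s18 {X : Type*} [NormedAddCommGroup X] [NormedSpace ℝ X] [CompleteSpace X]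
    {k : ℝ} (hk : 0 < k)
    (hc : ∀ x y : X, ‖x + y‖ ^ 2 + k * ‖x - y‖ ^ 2 ≤ 2 * ‖x‖ ^ 2 + 2 * ‖y‖ ^ 2)
    (S : Submodule ℝ X) (hS : IsClosed (S : Set X)) (x : X) :
    metricProj (S : Set X) x ∈ S ∧ ∀ m ∈ S, ‖x - metricProj (S : Set X) x‖ ≤ ‖x - m‖ := by
  have hne : (S : Set X).Nonempty := ⟨0, S.zero_mem⟩
  suffices H : ∃ y : X, y ∈ (S : Set X) ∧ ∀ m ∈ (S : Set X), ‖x - y‖ ≤ ‖x - m‖ by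
    exact Classical.epsilon_spec H
  obtain ⟨d, hd⟩ : ∃ d, d = Metric.infDist x (S : Set X) := ⟨_, rfl⟩
  have hd0 : 0 ≤ d := hd ▸ Metric.infDist_nonneg
  have hle : ∀ m ∈ S, d ≤ ‖x - m‖ := by
    intro m hm
    rw [hd, ← dist_eq_norm]
    exact Metric.infDist_le_dist_of_mem hm
  have hex : ∀ n : ℕ, ∃ y ∈ (S : Set X), dist x y < d + 1 / ((n : ℝ) + 1) := by
    intro n
    apply (Metric.infDist_lt_iff hne).mp
    rw [← hd]
    have : 0 < 1 / ((n : ℝ) + 1) := Nat.one_div_pos_of_nat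
    linarith
  choose y hyS hy using hex
  have ht : Tendsto (fun n : ℕ => 1 / ((n : ℝ) + 1)) atTop (𝓝 0) :=
    tendsto_one_div_add_atTop_nhds_zero_nat
  have hcau : CauchySeq y := by
    rw [Metric.cauchySeq_iff]
    intro ε hε
    have ht2 : Tendsto (fun n : ℕ => 4 * ((d + 1 / ((n : ℝ) + 1)) ^ 2 - d ^ 2)) atTop
        (𝓝 (4 * ((d + 0) ^ 2 - d ^ 2))) :=
      (((ht.const_add d).pow 2).sub_const _).const_mul 4
    have hpos : 4 * ((d + 0) ^ 2 - d ^ 2) < k * ε ^ 2 := by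
      have : 0 < k * ε ^ 2 := by positivity
      simpa using this
    obtain ⟨n0, hn0⟩ := ((ht2.eventually_lt_const hpos).exists)
    refine ⟨n0, fun m hm n hn => ?_⟩
    have bnd : ∀ j, n0 ≤ j → ‖x - y j‖ ≤ d + 1 / ((n0 : ℝ) + 1) := by
      intro j hj
      have h1 := hy j
      rw [dist_eq_norm] at h1
      have h2 : 1 / ((j : ℝ) + 1) ≤ 1 / ((n0 : ℝ) + 1) := Nat.one_div_le_one_div hj
      linarith
    have b1 := bnd m hm
    have b2 := bnd n hn
    have c1 := hc (x - y m) (x - y n)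
    have hmid : (2 : ℝ)⁻¹ • (y m + y n) ∈ S := S.smul_mem _ (S.add_mem (hyS m) (hyS n))
    have c2 := hle _ hmid
    have e1 : x - y m + (x - y n) = (2 : ℝ) • (x - (2 : ℝ)⁻¹ • (y m + y n)) := by module
    have e2 : x - y m - (x - y n) = y n - y m := by abel
    rw [e1, e2, norm_smul, ← dist_eq_norm (y n), dist_comm (y n), mul_pow,
      Real.norm_of_nonneg (by norm_num)] at c1
    have c3 : d ^ 2 ≤ ‖x - (2 : ℝ)⁻¹ • (y m + y n)‖ ^ 2 := by gcongr
    have c4 : ‖x - y m‖ ^ 2 ≤ (d + 1 / ((n0 : ℝ) + 1)) ^ 2 := by gcongr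
    have c5 : ‖x - y n‖ ^ 2 ≤ (d + 1 / ((n0 : ℝ) + 1)) ^ 2 := by gcongr
    have c6 : k * dist (y m) (y n) ^ 2 < k * ε ^ 2 := by
      linarith
    have c7 := lt_of_mul_lt_mul_left c6 hk.le
    exact lt_of_pow_lt_pow_left₀ 2 hε.le c7
  obtain ⟨z, hz⟩ := cauchySeq_tendsto_of_complete hcau
  refine ⟨z, hS.mem_of_tendsto hz (Eventually.of_forall hyS), fun m hm => ?_⟩
  have l1 : Tendsto (fun n => dist x (y n)) atTop (𝓝 (dist x z)) := tendsto_const_nhds.dist hz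
  have l2 : Tendsto (fun n : ℕ => d + 1 / ((n : ℝ) + 1)) atTop (𝓝 (d + 0)) := ht.const_add d
  have := le_of_tendsto_of_tendsto' l1 l2 (fun n => (hy n).le)
  rw [dist_eq_norm, add_zero] at this
  exact this.trans (hle m hm)

theorem aux_decomp {X : Type*} [NormedAddCommGroup X] [NormedSpace ℝ X] [CompleteSpace X]
    (M N : Submodule ℝ X) (hM : IsClosed (M : Set X)) (hN : IsClosed (N : Set X))
    (hMN : IsClosed ((M ⊔ N : Submodule ℝ X) : Set X)) :
    ∃ K > (0 : ℝ), ∀ w ∈ M ⊔ N, ∃ m ∈ M, ∃ n ∈ N, m + n = w ∧ ‖m‖ ≤ K * ‖w‖ ∧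
      ‖n‖ ≤ K * ‖w‖ := by
  have := hM.completeSpace_coe
  have := hN.completeSpace_coe
  have := hMN.completeSpace_coe
  let f0 : (M × N) →L[ℝ] X := M.subtypeL.coprod N.subtypeL
  have hf0 : ∀ p, f0 p ∈ M ⊔ N := by
    intro p
    simp only [f0, ContinuousLinearMap.coprod_apply]
    exact Submodule.add_mem_sup p.1.2 p.2.2
  let f : (M × N) →L[ℝ] (M ⊔ N : Submodule ℝ X) := f0.codRestrict _ hf0
  have hsurj : Function.Surjective f := by
    rintro ⟨w, hw⟩
    obtain ⟨m, hm, n, hn, rfl⟩ := Submodule.mem_sup.mp hw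
    exact ⟨(⟨m, hm⟩, ⟨n, hn⟩), rfl⟩
  obtain ⟨K, hK, h⟩ := f.exists_preimage_norm_le hsurj
  refine ⟨K, hK, fun w hw => ?_⟩
  obtain ⟨⟨m, n⟩, hp, hn⟩ := h ⟨w, hw⟩
  refine ⟨m, m.2, n, n.2, ?_, ?_, ?_⟩
  · exact congrArg Subtype.val hp
  · exact (norm_fst_le (m, n)).trans hn
  · exact (norm_snd_le (m, n)).trans hn

/-- distance estimate from the energy gap -/
theorem aux_gap {X : Type*} [NormedAddCommGroup X] [NormedSpace ℝ X]
    {k : ℝ} 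
    (hc : ∀ x y : X, ‖x + y‖ ^ 2 + k * ‖x - y‖ ^ 2 ≤ 2 * ‖x‖ ^ 2 + 2 * ‖y‖ ^ 2)
    (S : Submodule ℝ X) (x z : X) (hxz : z - x ∈ S) (hz : ∀ w ∈ S, ‖z‖ ≤ ‖z + w‖) :
    k * ‖z - x‖ ^ 2 ≤ 2 * (‖x‖ ^ 2 - ‖z‖ ^ 2) := by
  have h1 := hc z x
  have h2 := hz _ (S.smul_mem (-(2 : ℝ)⁻¹) hxz)
  have e : z + x = (2 : ℝ) • (z + -(2 : ℝ)⁻¹ • (z - x)) := by module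
  rw [e, norm_smul] at h1
  have h3 : ‖z‖ ^ 2 ≤ ‖z + -(2 : ℝ)⁻¹ • (z - x)‖ ^ 2 := by gcongr
  rw [mul_pow, Real.norm_of_nonneg (by norm_num)] at h1
  linarith

theorem aux_step {X : Type*} [NormedAddCommGroup X] [NormedSpace ℝ X]
    {k C K t : ℝ} (hk : 0 < k) (hC : 0 < C) (ht0 : 0 < t) (ht1 : t ≤ 1 / 2)
    (htB : 4 * C * K ^ 2 / k * t ≤ 1 / 2)
    (hc : ∀ x y : X, ‖x + y‖ ^ 2 + k * ‖x - y‖ ^ 2 ≤ 2 * ‖x‖ ^ 2 + 2 * ‖y‖ ^ 2)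
    (hs : ∀ x y : X, ‖x + y‖ ^ 2 + ‖x - y‖ ^ 2 ≤ 2 * ‖x‖ ^ 2 + C * ‖y‖ ^ 2)
    (S M N : Submodule ℝ X) (x x' z : X) (hxz : z - x ∈ S) (hz : ∀ w ∈ S, ‖z‖ ≤ ‖z + w‖)
    (hd : ∃ m ∈ M, ∃ n ∈ N, m + n = z - x ∧ ‖n‖ ≤ K * ‖z - x‖)
    (hx : ∀ n ∈ N, ‖x‖ ≤ ‖x + n‖) (hx' : ∀ m ∈ M, ‖x'‖ ≤ ‖x + m‖) :
    ‖x'‖ ^ 2 - ‖z‖ ^ 2 ≤ (1 - t / 2) * (‖x‖ ^ 2 - ‖z‖ ^ 2) := by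
  have hgap := aux_gap hc S x z hxz hz
  obtain ⟨m, hm, n, hn, hmn, hnK⟩ := hd
  have h1 := hx' _ (M.smul_mem t hm)
  -- convexity
  have e1 : x + t • m = (2 : ℝ)⁻¹ • ((x + (2 * t) • (z - x)) + (x - (2 * t) • n)) := by
    rw [← hmn]; module
  have h2 := hc (x + (2 * t) • (z - x)) (x - (2 * t) • n)
  have h3 : ‖x + t • m‖ ^ 2 = 4⁻¹ *
      ‖(x + (2 * t) • (z - x)) + (x - (2 * t) • n)‖ ^ 2 := by
    rw [e1, norm_smul, mul_pow]; norm_num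
  have h4 : 0 ≤ k * ‖(x + (2 * t) • (z - x)) - (x - (2 * t) • n)‖ ^ 2 := by positivity
  have h5 : ‖x + (2 * t) • (z - x)‖ ≤ (1 - 2 * t) * ‖x‖ + 2 * t * ‖z‖ := by
    have : x + (2 * t) • (z - x) = (1 - 2 * t) • x + (2 * t) • z := by module
    rw [this]
    refine (norm_add_le _ _).trans ?_
    rw [norm_smul, norm_smul, Real.norm_of_nonneg (by linarith), Real.norm_of_nonneg (by linarith)]
  have h6 : ‖x + (2 * t) • (z - x)‖ ^ 2 ≤ (1 - 2 * t) * ‖x‖ ^ 2 + 2 * t * ‖z‖ ^ 2 := by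
    have a1 : ‖x + (2 * t) • (z - x)‖ ^ 2 ≤ ((1 - 2 * t) * ‖x‖ + 2 * t * ‖z‖) ^ 2 := by gcongr
    have a2 : 0 ≤ (1 - 2 * t) * (2 * t) * (‖x‖ - ‖z‖) ^ 2 :=
      mul_nonneg (mul_nonneg (by linarith) (by linarith)) (sq_nonneg _)
    nlinarith
  have h7 := hs x ((2 * t) • n)
  have h8 := hx _ (N.smul_mem (2 * t) hn)
  have h9 : ‖x‖ ^ 2 ≤ ‖x + (2 * t) • n‖ ^ 2 := by gcongr
  have h10 : ‖(2 * t) • n‖ ^ 2 = 4 * t ^ 2 * ‖n‖ ^ 2 := by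
    rw [norm_smul, Real.norm_of_nonneg (by linarith)]; ring
  rw [h10] at h7
  have h11 : ‖x'‖ ^ 2 ≤ ‖x + t • m‖ ^ 2 := by gcongr
  have h12 : ‖n‖ ^ 2 ≤ K ^ 2 * ‖z - x‖ ^ 2 := by
    rw [← mul_pow]; gcongr
  have h13 : ‖z - x‖ ^ 2 ≤ 2 * (‖x‖ ^ 2 - ‖z‖ ^ 2) / k := by
    rw [le_div_iff₀ hk]; linarith
  set e := ‖x‖ ^ 2 - ‖z‖ ^ 2 with he
  have he0 : 0 ≤ e := by
    have : 0 ≤ k * ‖z - x‖ ^ 2 := by positivity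
    linarith
  have h14 : 2 * C * t ^ 2 * ‖n‖ ^ 2 ≤ t / 2 * e := by
    calc 2 * C * t ^ 2 * ‖n‖ ^ 2 ≤ 2 * C * t ^ 2 * (K ^ 2 * (2 * e / k)) := by
          gcongr
          exact h12.trans (by gcongr)
      _ = (4 * C * K ^ 2 / k * t) * (t * e) := by ring
      _ ≤ 1 / 2 * (t * e) := by gcongr
      _ = t / 2 * e := by ring
  nlinarith

theorem statement18 {X : Type*} [NormedAddCommGroup X] [NormedSpace ℝ X] [CompleteSpace X]
    (hconv : PowerConvex X 2) (hsmooth : PowerSmooth X 2)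
    (M N : Submodule ℝ X) (hM : IsClosed (M : Set X)) (hN : IsClosed (N : Set X))
    (hMN : IsClosed ((M ⊔ N : Submodule ℝ X) : Set X))
    (a : X) (x : ℕ → X) (hx0 : x 0 = a)
    (hodd : ∀ n : ℕ, x (2 * n + 1) = x (2 * n) - metricProj (M : Set X) (x (2 * n)))
    (heven : ∀ n : ℕ, x (2 * n + 2) = x (2 * n + 1) - metricProj (N : Set X) (x (2 * n + 1))) :
    Filter.Tendsto x Filter.atTop
      (𝓝 (a - metricProj ((M ⊔ N : Submodule ℝ X) : Set X) a)) ∧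
    ∃ C > (0 : ℝ), ∃ q ∈ Set.Ioo (0 : ℝ) 1, ∀ n : ℕ,
      ‖(a - metricProj ((M ⊔ N : Submodule ℝ X) : Set X) a) - x n‖ ≤ C * q ^ n := by
  obtain ⟨k, hk, hc⟩ := aux_convex hconv
  obtain ⟨C, hC, hs⟩ := aux_smooth hsmooth
  obtain ⟨K, hK, hdec⟩ := aux_decomp M N hM hN hMN
  have pM := aux_proj_s18 hk hc M hM
  have pN := aux_proj_s18 hk hc N hN
  have pS := aux_proj_s18 hk hc (M ⊔ N) hMN a
  set z := a - metricProj ((M ⊔ N : Submodule ℝ X) : Set X) a with hz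
  have hzmin : ∀ w ∈ M ⊔ N, ‖z‖ ≤ ‖z + w‖ := by
    intro w hw
    have := pS.2 _ ((M ⊔ N).sub_mem pS.1 hw)
    rwa [← sub_add] at this
  have hza : z - a ∈ M ⊔ N := by
    have : z - a = -metricProj ((M ⊔ N : Submodule ℝ X) : Set X) a := by rw [hz]; abel
    rw [this]; exact neg_mem pS.1
  have hMle : M ≤ M ⊔ N := le_sup_left
  have hNle : N ≤ M ⊔ N := le_sup_right
  have stepmem : ∀ n, x n - x (n + 1) ∈ M ⊔ N := by
    intro n
    rcases Nat.even_or_odd' n with ⟨j, rfl | rfl⟩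
    · rw [hodd j, sub_sub_cancel]; exact hMle (pM _).1
    · rw [heven j, sub_sub_cancel]; exact hNle (pN _).1
  have hmem : ∀ n, z - x n ∈ M ⊔ N := by
    intro n
    induction n with
    | zero => rw [hx0]; exact hza
    | succ n ih =>
      have : z - x (n + 1) = (z - x n) + (x n - x (n + 1)) := by abel
      rw [this]; exact add_mem ih (stepmem n)
  -- step minimality
  have minM : ∀ j, ∀ m ∈ M, ‖x (2 * j + 1)‖ ≤ ‖x (2 * j) + m‖ := by
    intro j m hm
    have := (pM (x (2 * j))).2 (-m) (neg_mem hm)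
    rw [hodd j]; rwa [sub_neg_eq_add] at this
  have minN : ∀ j, ∀ m ∈ N, ‖x (2 * j + 2)‖ ≤ ‖x (2 * j + 1) + m‖ := by
    intro j m hm
    have := (pN (x (2 * j + 1))).2 (-m) (neg_mem hm)
    rw [heven j]; rwa [sub_neg_eq_add] at this
  have minM' : ∀ j, ∀ m ∈ M, ‖x (2 * j + 1)‖ ≤ ‖x (2 * j + 1) + m‖ := by
    intro j m hm
    have h1 := minM j (-metricProj (M : Set X) (x (2 * j)) + m) (add_mem (neg_mem (pM _).1) hm)
    rwa [← add_assoc, ← sub_eq_add_neg, ← hodd j] at h1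
  have minN' : ∀ j, ∀ m ∈ N, ‖x (2 * j + 2)‖ ≤ ‖x (2 * j + 2) + m‖ := by
    intro j m hm
    have h1 := minN j (-metricProj (N : Set X) (x (2 * j + 1)) + m)
      (add_mem (neg_mem (pN _).1) hm)
    rwa [← add_assoc, ← sub_eq_add_neg, ← heven j] at h1
  obtain ⟨B, hB⟩ : ∃ B, B = 4 * C * K ^ 2 / k := ⟨_, rfl⟩
  have hB0 : 0 < B := by rw [hB]; positivity
  obtain ⟨t, ht⟩ : ∃ t, t = 1 / (2 + 2 * B) := ⟨_, rfl⟩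
  have ht0 : 0 < t := by rw [ht]; positivity
  have ht1 : t ≤ 1 / 2 := by
    rw [ht]; apply one_div_le_one_div_of_le <;> linarith
  have htB : 4 * C * K ^ 2 / k * t ≤ 1 / 2 := by
    rw [← hB, ht, mul_one_div, div_le_div_iff₀ (by positivity) (by norm_num)]
    linarith
  obtain ⟨q, hq⟩ : ∃ q, q = 1 - t / 2 := ⟨_, rfl⟩
  have hq0 : 0 < q := by linarith
  have hq1 : q < 1 := by linarith
  have hstep : ∀ n, ‖x (n + 2)‖ ^ 2 - ‖z‖ ^ 2 ≤ q * (‖x (n + 1)‖ ^ 2 - ‖z‖ ^ 2) := by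
    intro n
    rw [hq]
    rcases Nat.even_or_odd' n with ⟨j, rfl | rfl⟩
    · refine aux_step hk hC ht0 ht1 htB hc hs (M ⊔ N) N M _ _ z (hmem _) hzmin ?_
        (minM' j) (minN j)
      obtain ⟨m, hm, n, hn, h1, h2, h3⟩ := hdec _ (hmem (2 * j + 1))
      exact ⟨n, hn, m, hm, by rw [add_comm, h1], h2⟩
    · refine aux_step hk hC ht0 ht1 htB hc hs (M ⊔ N) M N _ _ z (hmem _) hzmin ?_
        (minN' j) (minM (j + 1))
      obtain ⟨m, hm, n, hn, h1, h2, h3⟩ := hdec _ (hmem (2 * j + 2))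
      exact ⟨m, hm, n, hn, h1, h3⟩
  have hfirst : ‖x 1‖ ^ 2 ≤ ‖x 0‖ ^ 2 := by
    have := minM 0 0 M.zero_mem
    rw [add_zero] at this
    gcongr
  obtain ⟨E, hE⟩ : ∃ E, E = ‖x 0‖ ^ 2 - ‖z‖ ^ 2 := ⟨_, rfl⟩
  have hgap : ∀ n, k * ‖z - x n‖ ^ 2 ≤ 2 * (‖x n‖ ^ 2 - ‖z‖ ^ 2) := fun n =>
    aux_gap hc (M ⊔ N) (x n) z (hmem n) hzmin
  have hE0 : 0 ≤ E := by
    have h1 := hgap 0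
    have : 0 ≤ k * ‖z - x 0‖ ^ 2 := by positivity
    linarith
  have hgeo1 : ∀ n, ‖x (n + 1)‖ ^ 2 - ‖z‖ ^ 2 ≤ q ^ n * E := by
    intro n
    induction n with
    | zero => rw [pow_zero, one_mul, hE]; linarith
    | succ n ih =>
      refine (hstep n).trans ?_
      calc _ ≤ q * (q ^ n * E) := by gcongr
        _ = _ := by ring
  have hgeo : ∀ n, ‖x n‖ ^ 2 - ‖z‖ ^ 2 ≤ q ^ n * (E / q) := by
    intro n
    cases n with
    | zero =>
      rw [pow_zero, one_mul, ← hE, le_div_iff₀ hq0]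
      nlinarith
    | succ n =>
      refine (hgeo1 n).trans (le_of_eq ?_)
      rw [pow_succ, mul_assoc, mul_div_cancel₀ _ hq0.ne']
  obtain ⟨A, hA⟩ : ∃ A, A = 2 / k * (E / q) := ⟨_, rfl⟩
  have hA0 : 0 ≤ A := by rw [hA]; positivity
  have hfin : ∀ n, ‖z - x n‖ ≤ (√A + 1) * √q ^ n := by
    intro n
    have h1 : ‖z - x n‖ ^ 2 ≤ A * q ^ n := by
      have h2 := hgap n
      have h3 := hgeo n
      rw [hA, div_mul_eq_mul_div, div_mul_eq_mul_div, le_div_iff₀ hk]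
      linarith
    have h2 : ‖z - x n‖ ≤ √A * √q ^ n := by
      refine (sq_le_sq₀ (norm_nonneg _) (by positivity)).mp ?_
      rw [mul_pow, Real.sq_sqrt hA0, ← pow_mul, mul_comm n 2, pow_mul, Real.sq_sqrt hq0.le]
      exact h1
    refine h2.trans ?_
    gcongr
    linarith
  have hsq1 : √q < 1 := by
    rw [Real.sqrt_lt' one_pos]; linarith
  refine ⟨?_, √A + 1, by positivity, √q, ⟨Real.sqrt_pos.mpr hq0, hsq1⟩, hfin⟩
  rw [tendsto_iff_norm_sub_tendsto_zero]
  have hlim : Tendsto (fun n : ℕ => (√A + 1) * √q ^ n) atTop (𝓝 ((√A + 1) * 0)) :=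
    (tendsto_pow_atTop_nhds_zero_of_lt_one (Real.sqrt_nonneg _) hsq1).const_mul _
  rw [mul_zero] at hlim
  refine squeeze_zero (fun _ => norm_nonneg _) (fun n => ?_) hlim
  rw [norm_sub_rev]
  exact hfin n
end
end

section
/- Let X be a real Banach space that is uniformly convex and uniformly smooth, let 1 < p < ∞ with conjugate exponent p* (1/p + 1/p* = 1), and let M be a closed linear subspace of X with annihilator M^⊥ ⊆ X*. Then for every x ∈ X, the Bregman distance in the dual space satisfies D_{p*}(M^⊥, j_p(x)) = (1/p)‖x‖^p − (1/p) dist(x,M)^p. -/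
open Filter Topology

noncomputable section

variable {X : Type*} [NormedAddCommGroup X] [NormedSpace ℝ X]

lemma unit_normalize {E : Type*} [NormedAddCommGroup E] [NormedSpace ℝ E]
    {x : E} (hx : x ≠ 0) : ‖‖x‖⁻¹ • x‖ = 1 := by
  rw [norm_smul, norm_inv, norm_norm, inv_mul_cancel₀ (norm_ne_zero_iff.mpr hx)]

lemma hasFDerivAt_norm_of_bounds {E : Type*} [NormedAddCommGroup E] [NormedSpace ℝ E]
    (x : E) (φ : E →L[ℝ] ℝ) (hlow : ∀ h, ‖x‖ + φ h ≤ ‖x + h‖)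
    (hup : ∀ ε > (0 : ℝ), ∃ δ > (0 : ℝ), ∀ h, h ≠ 0 → ‖h‖ < δ →
      ‖x + h‖ ≤ ‖x‖ + φ h + ε * ‖h‖) :
    HasFDerivAt (fun y : E => ‖y‖) φ x := by
  rw [hasFDerivAt_iff_isLittleO_nhds_zero, Asymptotics.isLittleO_iff]
  intro ε hε
  obtain ⟨δ, hδ, H⟩ := hup ε hε
  filter_upwards [Metric.ball_mem_nhds (0 : E) hδ] with h hh
  rw [mem_ball_zero_iff] at hh
  by_cases h0 : h = 0
  · simp [h0]
  · have h1 := hlow h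
    have h2 := H h h0 hh
    rw [Real.norm_eq_abs, abs_le]
    constructor
    · have : 0 ≤ ε * ‖h‖ := by positivity
      linarith
    · linarith

lemma hasFDerivAt_pow_zero {E : Type*} [NormedAddCommGroup E] [NormedSpace ℝ E]
    (p : ℝ) (hp : 1 < p) :
    HasFDerivAt (fun y : E => 1 / p * ‖y‖ ^ p) (0 : E →L[ℝ] ℝ) 0 := by
  have h : HasFDerivAt (fun y : E => ‖y‖ ^ p) (0 : E →L[ℝ] ℝ) 0 := by
    rw [hasFDerivAt_iff_isLittleO_nhds_zero]
    have h1 : Tendsto (fun h : E => ‖h‖ ^ (p - 1)) (𝓝 0) (𝓝 0) := by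
      have hc : Continuous (fun h : E => ‖h‖ ^ (p - 1)) :=
        continuous_norm.rpow_const (fun _ => Or.inr (by linarith))
      have := hc.tendsto 0
      simpa [Real.zero_rpow (show p - 1 ≠ 0 by linarith)] using this
    rw [Asymptotics.isLittleO_iff]
    intro ε hε
    filter_upwards [h1.eventually (gt_mem_nhds hε)] with h hh
    have : ‖h‖ ^ p = ‖h‖ ^ (p - 1) * ‖h‖ := by
      by_cases h0 : h = 0
      · simp [h0, Real.zero_rpow (show p ≠ 0 by linarith)]
      · conv_rhs => rw [← Real.rpow_add_one (norm_ne_zero_iff.mpr h0)]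
        simp
    simp only [zero_add, norm_zero, Real.zero_rpow (show p ≠ 0 by linarith), sub_zero,
      ContinuousLinearMap.zero_apply]
    rw [Real.norm_of_nonneg (by positivity), this]
    gcongr
  simpa using h.const_mul (1 / p)

lemma hasFDerivAt_normPow {E : Type*} [NormedAddCommGroup E] [NormedSpace ℝ E]
    (p : ℝ) (hp : 1 < p) (x : E) (hx : x ≠ 0) (φ : E →L[ℝ] ℝ)
    (h : HasFDerivAt (fun y : E => ‖y‖) φ x) :
    HasFDerivAt (fun y : E => 1 / p * ‖y‖ ^ p) (‖x‖ ^ (p - 1) • φ) x := by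
  have h1 := (Real.hasDerivAt_rpow_const (x := ‖x‖) (p := p)
    (Or.inl (norm_ne_zero_iff.mpr hx))).comp_hasFDerivAt x h
  have h2 := h1.const_mul (1 / p)
  have h3 : (1 / p) • (p * ‖x‖ ^ (p - 1)) • φ = ‖x‖ ^ (p - 1) • φ := by
    rw [smul_smul]
    congr 1
    field_simp
  rw [h3] at h2
  exact h2

lemma norm_hasFDerivAt_of_unifSmooth {E : Type*} [NormedAddCommGroup E] [NormedSpace ℝ E]
    (hs : UnifSmooth E) (x : E) (hx : x ≠ 0) (φ : E →L[ℝ] ℝ) (hφ : ‖φ‖ ≤ 1) (hφx : φ x = ‖x‖) :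
    HasFDerivAt (fun y : E => ‖y‖) φ x := by
  have hle : ∀ y, φ y ≤ ‖y‖ := fun y =>
    (le_abs_self _).trans ((φ.le_of_opNorm_le hφ y).trans_eq (one_mul _))
  have hxp : 0 < ‖x‖ := norm_pos_iff.mpr hx
  have hlow : ∀ h, ‖x‖ + φ h ≤ ‖x + h‖ := fun h => by
    have := hle (x + h)
    rwa [map_add, hφx] at this
  refine hasFDerivAt_norm_of_bounds x φ hlow ?_
  intro ε hε
  have h1 := hs.eventually (gt_mem_nhds (show (0 : ℝ) < ε / 2 by positivity))
  rw [eventually_nhdsWithin_iff, Metric.eventually_nhds_iff] at h1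
  obtain ⟨δ, hδ, H⟩ := h1
  refine ⟨δ * ‖x‖, by positivity, fun h h0 hh => ?_⟩
  have hhp : 0 < ‖h‖ := norm_pos_iff.mpr h0
  set τ := ‖h‖ / ‖x‖ with hτ
  have hτp : 0 < τ := by positivity
  have hτδ : τ < δ := by rw [hτ, div_lt_iff₀ hxp]; exact hh
  have h2 := H (y := τ) (by rw [Real.dist_eq, sub_zero, abs_of_pos hτp]; exact hτδ) hτp
  rw [div_lt_iff₀ hτp] at h2
  have hmem : (‖x + h‖ + ‖x - h‖) / (2 * ‖x‖) - 1 ≤ modSmooth E τ := by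
    apply le_csSup
    · refine ⟨τ, ?_⟩
      rintro d ⟨a, b, ha, hb, rfl⟩
      have e1 := norm_add_le a (τ • b)
      have e2 := norm_sub_le a (τ • b)
      rw [norm_smul, hb, ha, Real.norm_of_nonneg hτp.le] at e1 e2
      linarith
    · refine ⟨‖x‖⁻¹ • x, ‖h‖⁻¹ • h, unit_normalize hx, unit_normalize h0, ?_⟩
      have e : τ • ‖h‖⁻¹ • h = ‖x‖⁻¹ • h := by
        rw [smul_smul]; congr 1; rw [hτ]; field_simp
      rw [e, ← smul_add, ← smul_sub, norm_smul, norm_smul, norm_inv, norm_norm]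
      field_simp
  have h3 : (‖x + h‖ + ‖x - h‖) / (2 * ‖x‖) < ε / 2 * τ + 1 := by linarith
  rw [div_lt_iff₀ (by positivity)] at h3
  have h4 : (ε / 2 * τ + 1) * (2 * ‖x‖) = ε * ‖h‖ + 2 * ‖x‖ := by
    rw [hτ]; field_simp
  have h5 := hlow (-h)
  rw [map_neg, ← sub_eq_add_neg, ← sub_eq_add_neg] at h5
  linarith

lemma exists_unit_apply_gt {E : Type*} [NormedAddCommGroup E] [NormedSpace ℝ E]
    (g : E →L[ℝ] ℝ) (r : ℝ) (hr : 0 ≤ r) (hg : r < ‖g‖) : ∃ u : E, ‖u‖ = 1 ∧ r < g u := by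
  obtain ⟨v, hv, hrv⟩ : ∃ v : E, ‖v‖ ≤ 1 ∧ r < ‖g v‖ := by
    by_contra hcon
    push Not at hcon
    refine absurd (g.opNorm_le_bound hr (fun z => ?_)) (not_le.mpr hg)
    by_cases hz : z = 0
    · simp [hz]
    · have := hcon (‖z‖⁻¹ • z) (unit_normalize hz).le
      rw [map_smul, norm_smul, norm_inv, norm_norm, inv_mul_le_iff₀ (norm_pos_iff.mpr hz)] at this
      linarith
  have hv0 : v ≠ 0 := by
    rintro rfl
    simp at hrv
    linarith
  have hvp : 0 < ‖v‖ := norm_pos_iff.mpr hv0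
  have key : r < ‖v‖⁻¹ * |g v| := by
    rw [Real.norm_eq_abs] at hrv
    rw [inv_mul_eq_div, lt_div_iff₀ hvp]
    nlinarith
  rcases abs_cases (g v) with ⟨ha, -⟩ | ⟨ha, -⟩
  · refine ⟨‖v‖⁻¹ • v, unit_normalize hv0, ?_⟩
    rw [map_smul, smul_eq_mul, ← ha]; exact key
  · refine ⟨-(‖v‖⁻¹ • v), by rw [norm_neg]; exact unit_normalize hv0, ?_⟩
    rw [map_neg, map_smul, smul_eq_mul, ← mul_neg, ← ha]; exact key

lemma norm_hasFDerivAt_dual {E : Type*} [NormedAddCommGroup E] [NormedSpace ℝ E]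
    (hc : UnifConvex E) (f : E →L[ℝ] ℝ) (hf : f ≠ 0) (y : E) (hy : ‖y‖ = 1) (hfy : f y = ‖f‖) :
    HasFDerivAt (fun g : E →L[ℝ] ℝ => ‖g‖) (ContinuousLinearMap.apply ℝ ℝ y) f := by
  have hfp : 0 < ‖f‖ := norm_pos_iff.mpr hf
  have hle : ∀ (g : E →L[ℝ] ℝ) z, g z ≤ ‖g‖ * ‖z‖ := fun g z =>
    (le_abs_self _).trans (g.le_opNorm z)
  refine hasFDerivAt_norm_of_bounds f _ ?_ ?_
  · intro h
    have := hle (f + h) y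
    simpa [hy, hfy] using this
  · intro ε hε
    set ε' := min (ε / 2) 2 with hε'
    have hε'p : 0 < ε' := by positivity
    have hε'2 : ε' ≤ 2 := min_le_right _ _
    have hε'ε : ε' ≤ ε / 2 := min_le_left _ _
    have hm := hc ε' hε'p hε'2
    set m := modConvex E ε' with hmdef
    set η := min (ε / 2) 1 with hη
    have hηp : 0 < η := by positivity
    have hη1 : η ≤ 1 := min_le_right _ _
    have hηε : η ≤ ε / 2 := min_le_left _ _
    refine ⟨min (‖f‖ / 2) (‖f‖ * m / 2), by positivity, fun h h0 hh => ?_⟩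
    have hhp : 0 < ‖h‖ := norm_pos_iff.mpr h0
    have hh1 : ‖h‖ < ‖f‖ / 2 := hh.trans_le (min_le_left _ _)
    have hh2 : ‖h‖ < ‖f‖ * m / 2 := hh.trans_le (min_le_right _ _)
    have hηh : η * ‖h‖ ≤ ‖h‖ := by nlinarith
    have hηh0 : 0 < η * ‖h‖ := by positivity
    have hfh : ‖f‖ - ‖h‖ ≤ ‖f + h‖ := by
      have := norm_sub_norm_le f (-h)
      rwa [norm_neg, sub_neg_eq_add] at this
    obtain ⟨u, hu, hru⟩ := exists_unit_apply_gt (f + h) (‖f + h‖ - η * ‖h‖)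
      (by linarith) (by linarith)
    have hru' : ‖f + h‖ - η * ‖h‖ < f u + h u := hru
    have hhu := hle h u
    have hfu := hle f u
    have hfuy := hle f (u + y)
    rw [hu, mul_one] at hhu hfu
    rw [map_add, hfy] at hfuy
    have hclose : ‖u - y‖ < ε' := by
      by_contra hcon
      push Not at hcon
      have hmle : m ≤ 1 - ‖u + y‖ / 2 := by
        apply csInf_le
        · refine ⟨0, ?_⟩
          rintro d ⟨a, b, ha, hb, -, rfl⟩
          have := norm_add_le a b
          linarith
        · exact ⟨u, y, hu, hy, hcon, rfl⟩
      have : ‖f‖ * m ≤ ‖f‖ * (1 - ‖u + y‖ / 2) := by gcongr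
      nlinarith
    have hd := hle h (u - y)
    rw [map_sub] at hd
    have hd2 : ‖h‖ * ‖u - y‖ ≤ ‖h‖ * (ε / 2) := by gcongr; linarith
    have hd3 : η * ‖h‖ ≤ ε / 2 * ‖h‖ := by gcongr
    change ‖f + h‖ ≤ ‖f‖ + h y + ε * ‖h‖
    linarith

lemma dualityMap_props {E : Type*} [NormedAddCommGroup E] [NormedSpace ℝ E]
    (hc : UnifConvex E) (hs : UnifSmooth E) (p q : ℝ) (hpq : p.HolderConjugate q) (x : E) :
    dualityMap p x x = ‖x‖ ^ p ∧ ‖dualityMap p x‖ ^ q = ‖x‖ ^ p ∧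
      dualityMap q (dualityMap p x) = ContinuousLinearMap.apply ℝ ℝ x := by
  have hp := hpq.lt
  have hq := hpq.symm.lt
  by_cases hx : x = 0
  · have h1 : dualityMap p x = 0 := by
      rw [hx]; exact (hasFDerivAt_pow_zero p hp).fderiv
    have h2 : dualityMap q (0 : E →L[ℝ] ℝ) = 0 := (hasFDerivAt_pow_zero q hq).fderiv
    rw [h1, h2, hx]
    simp [Real.zero_rpow (show p ≠ 0 by linarith), Real.zero_rpow (show q ≠ 0 by linarith)]
  · have hxp : 0 < ‖x‖ := norm_pos_iff.mpr hx
    obtain ⟨φ, hφ, hφx⟩ := exists_dual_vector ℝ x hxp.ne'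
    replace hφx : φ x = ‖x‖ := by simpa using hφx
    have h1 : dualityMap p x = ‖x‖ ^ (p - 1) • φ :=
      (hasFDerivAt_normPow p hp x hx φ
        (norm_hasFDerivAt_of_unifSmooth hs x hx φ hφ.le hφx)).fderiv
    have hpp : 0 < ‖x‖ ^ (p - 1) := Real.rpow_pos_of_pos hxp _
    have hn : ‖dualityMap p x‖ = ‖x‖ ^ (p - 1) := by
      rw [h1, norm_smul, hφ, mul_one, Real.norm_of_nonneg hpp.le]
    have hf0 : dualityMap p x ≠ 0 := by
      rw [← norm_pos_iff, hn]; exact hpp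
    have hxx : dualityMap p x x = ‖x‖ ^ p := by
      rw [h1, ContinuousLinearMap.smul_apply, hφx, smul_eq_mul,
        ← Real.rpow_add_one hxp.ne', sub_add_cancel]
    have hmul : (p - 1) * (q - 1) = 1 := by
      have := hpq.mul_eq_add
      linarith
    refine ⟨hxx, ?_, ?_⟩
    · rw [hn, ← Real.rpow_mul hxp.le]
      congr 1
      exact hpq.sub_one_mul_conj
    · have hd := norm_hasFDerivAt_dual hc (dualityMap p x) hf0 (‖x‖⁻¹ • x)
        (unit_normalize hx) (by
          rw [h1, ContinuousLinearMap.smul_apply, map_smul, hφx, ← h1, hn, smul_eq_mul,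
            smul_eq_mul, inv_mul_cancel₀ hxp.ne', mul_one])
      have h3 : dualityMap q (dualityMap p x) = _ := (hasFDerivAt_normPow q hq _ hf0 _ hd).fderiv
      rw [h3, hn, ← Real.rpow_mul hxp.le, hmul, Real.rpow_one, map_smul, smul_smul,
        mul_inv_cancel₀ hxp.ne', one_smul]

lemma annihilator_le {E : Type*} [NormedAddCommGroup E] [NormedSpace ℝ E]
    (M : Submodule ℝ E) (x : E) (g : E →L[ℝ] ℝ) (hg : ∀ m ∈ M, g m = 0) :
    g x ≤ ‖g‖ * Metric.infDist x (M : Set E) := by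
  by_cases h0 : g = 0
  · simp [h0]
  have hgp : 0 < ‖g‖ := norm_pos_iff.mpr h0
  rw [← div_le_iff₀' hgp]
  refine (Metric.le_infDist ⟨0, M.zero_mem⟩).mpr ?_
  intro m hm
  rw [div_le_iff₀' hgp, dist_eq_norm]
  have h1 := (le_abs_self _).trans (g.le_opNorm (x - m))
  rwa [map_sub, hg m hm, sub_zero] at h1

lemma annihilator_exists {E : Type*} [NormedAddCommGroup E] [NormedSpace ℝ E]
    (M : Submodule ℝ E) (x : E) (hd : Metric.infDist x (M : Set E) ≠ 0) :
    ∃ g : E →L[ℝ] ℝ, ‖g‖ ≤ 1 ∧ (∀ m ∈ M, g m = 0) ∧ g x = Metric.infDist x (M : Set E) := by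
  have hn : ‖(Submodule.Quotient.mk x : E ⧸ M)‖ = Metric.infDist x (M : Set E) :=
    QuotientAddGroup.norm_mk (S := M.toAddSubgroup) x
  obtain ⟨φ, hφ, hφx⟩ := exists_dual_vector ℝ (Submodule.Quotient.mk x : E ⧸ M) (by rwa [hn])
  have hb : ∀ z, ‖(φ.toLinearMap.comp M.mkQ) z‖ ≤ 1 * ‖z‖ := fun z =>
    (φ.le_of_opNorm_le hφ.le _).trans (by gcongr; exact Submodule.Quotient.norm_mk_le M z)
  refine ⟨(φ.toLinearMap.comp M.mkQ).mkContinuous 1 hb,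
    LinearMap.mkContinuous_norm_le _ zero_le_one hb, ?_, ?_⟩
  · intro m hm
    have : M.mkQ m = 0 := by simpa using hm
    simp only [LinearMap.mkContinuous_apply, LinearMap.comp_apply, this, map_zero]
  · rw [← hn]; simpa using hφx

theorem statement19 {X : Type*} [NormedAddCommGroup X] [NormedSpace ℝ X] [CompleteSpace X]
    (hconv : UnifConvex X) (hsmooth : UnifSmooth X)
    (p pstar : ℝ) (hp : 1 < p) (hconj : 1 / p + 1 / pstar = 1)
    (M : Submodule ℝ X) (hM : IsClosed (M : Set X)) (x : X) :
    bregmanDistSet pstar {f : X →L[ℝ] ℝ | ∀ m ∈ M, f m = 0} (dualityMap p x) =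
      1 / p * ‖x‖ ^ p - 1 / p * Metric.infDist x (M : Set X) ^ p := by
  have hpq : p.HolderConjugate pstar := Real.holderConjugate_iff.mpr ⟨hp, by simpa using hconj⟩
  have hq := hpq.symm.lt
  obtain ⟨h1, h2, h3⟩ := dualityMap_props hconv hsmooth p pstar hpq x
  set d := Metric.infDist x (M : Set X) with hd
  have hd0 : 0 ≤ d := Metric.infDist_nonneg
  have hform : ∀ g : X →L[ℝ] ℝ, bregmanDist pstar g (dualityMap p x) =
      1 / pstar * ‖g‖ ^ pstar + 1 / p * ‖x‖ ^ p - g x := by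
    intro g
    have e : 1 / pstar = 1 - 1 / p := by linarith
    simp only [bregmanDist, h3, h2, ContinuousLinearMap.apply_apply,
      ContinuousLinearMap.sub_apply, h1, e]
    ring
  have hlow : ∀ g ∈ {f : X →L[ℝ] ℝ | ∀ m ∈ M, f m = 0},
      1 / p * ‖x‖ ^ p - 1 / p * d ^ p ≤ bregmanDist pstar g (dualityMap p x) := by
    intro g hg
    rw [hform]
    have a := annihilator_le M x g hg
    have b := Real.young_inequality_of_nonneg (norm_nonneg g) hd0 hpq.symm
    rw [div_eq_inv_mul, div_eq_inv_mul, ← one_div, ← one_div] at b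
    linarith
  obtain ⟨G, hG, hGe⟩ : ∃ G ∈ {f : X →L[ℝ] ℝ | ∀ m ∈ M, f m = 0},
      bregmanDist pstar G (dualityMap p x) ≤ 1 / p * ‖x‖ ^ p - 1 / p * d ^ p := by
    by_cases hd00 : d = 0
    · refine ⟨0, fun m _ => rfl, ?_⟩
      rw [hform, hd00]
      simp [Real.zero_rpow (show p ≠ 0 by linarith), Real.zero_rpow (show pstar ≠ 0 by linarith)]
    · have hdp : 0 < d := lt_of_le_of_ne hd0 (Ne.symm hd00)
      obtain ⟨g, hg1, hg2, hg3⟩ := annihilator_exists M x hd00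
      refine ⟨d ^ (p - 1) • g, fun m hm => by simp [hg2 m hm], ?_⟩
      have hpp : 0 < d ^ (p - 1) := Real.rpow_pos_of_pos hdp _
      have hn : ‖d ^ (p - 1) • g‖ ≤ d ^ (p - 1) := by
        rw [norm_smul, Real.norm_of_nonneg hpp.le]
        nlinarith
      have hn2 : ‖d ^ (p - 1) • g‖ ^ pstar ≤ d ^ p := by
        refine (Real.rpow_le_rpow (norm_nonneg _) hn (by linarith)).trans_eq ?_
        rw [← Real.rpow_mul hd0, hpq.sub_one_mul_conj]
      have hx : (d ^ (p - 1) • g) x = d ^ p := by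
        rw [ContinuousLinearMap.smul_apply, hg3, smul_eq_mul, ← hd,
          ← Real.rpow_add_one hdp.ne', sub_add_cancel]
      rw [hform, hx]
      have : 1 / pstar * ‖d ^ (p - 1) • g‖ ^ pstar ≤ 1 / pstar * d ^ p := by gcongr
      have e : 1 / pstar = 1 - 1 / p := by linarith
      have e2 : 1 / pstar * d ^ p = d ^ p - 1 / p * d ^ p := by rw [e]; ring
      linarith
  have hspec := Classical.epsilon_spec (p := fun y : X →L[ℝ] ℝ =>
      y ∈ {f : X →L[ℝ] ℝ | ∀ m ∈ M, f m = 0} ∧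
      ∀ m ∈ {f : X →L[ℝ] ℝ | ∀ m ∈ M, f m = 0},
        bregmanDist pstar y (dualityMap p x) ≤ bregmanDist pstar m (dualityMap p x))
      ⟨G, hG, fun m hm => hGe.trans (hlow m hm)⟩
  exact le_antisymm ((hspec.2 G hG).trans hGe) (hlow _ hspec.1)
end
end
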